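/- Let p be an odd prime with p > 10. Then (p^5/2^11) · Σ_{θ=1}^{p-1} 1/sin^10(πθ/p) = (1/2048) · ((2/93555)p^15 + (1/2835)p^13 + (26/8505)p^11 + (164/8505)p^9 + (128/945)p^7 - (14797/93555)p^5). (This is the genus-6 case of the degree formula of Corollary 5.4.) -/

import Mathlib

open Real

/-!
Put `sₖ = sin (π k / n)` for `0 < k < n`. The roots of the Chebyshev polynomial `Uₙ₋₁` are the
numbers `cos (π k / n)`, so `sin² (n x) / sin² x` is a product over `k` which the symmetry
`k ↔ n - k` turns into `∏ 4 (sₖ² - sin² x)`. Since `Tₙ (1 - 2 sin² x) = 1 - 2 sin² (n x)`, this is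
the factorisation `Tₙ (1 + X) = 1 + n² X ∏ (1 + X / (2 sₖ²))`. Hence the elementary symmetric
functions of the numbers `1 / (2 sₖ²)` are Taylor coefficients of `Tₙ` at `1`, which are known in
closed form, and Newton's identities convert them into the power sum of exponent `5`.
-/

section SymmetricFunctions

open Polynomial

theorem psum_succ_eq_esymm (σ R : Type*) [Fintype σ] [CommRing R] (k : ℕ) :
    MvPolynomial.psum σ R (k + 1) = (-1) ^ k * (k + 1) * MvPolynomial.esymm σ R (k + 1) +
      ∑ j ∈ Finset.range k,
        (-1) ^ j * MvPolynomial.esymm σ R (j + 1) * MvPolynomial.psum σ R (k - j) := by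
  rw [MvPolynomial.psum_eq_mul_esymm_sub_sum σ R (k + 1) k.succ_pos, sub_eq_add_neg,
    ← Finset.sum_neg_distrib]
  congr 1
  · push_cast
    ring
  · refine (Finset.sum_nbij' (fun j ↦ (j + 1, k - j)) (fun m ↦ m.1 - 1) ?_ ?_ ?_ ?_ ?_).symm
    · grind [Finset.HasAntidiagonal.mem_antidiagonal]
    · grind [Finset.HasAntidiagonal.mem_antidiagonal]
    · grind
    · grind [Finset.HasAntidiagonal.mem_antidiagonal]
    · intro j _
      ring

theorem sum_pow_succ_eq_esymm {ι R : Type*} [CommRing R] (s : Finset ι) (a : ι → R) (k : ℕ) :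
    let e := (s.val.map a).esymm
    ∑ i ∈ s, a i ^ (k + 1) = (-1) ^ k * (k + 1) * e (k + 1) +
      ∑ j ∈ Finset.range k, (-1) ^ j * e (j + 1) * ∑ i ∈ s, a i ^ (k - j) := by
  have aeval_psum (m : ℕ) :
      MvPolynomial.aeval (fun i : s ↦ a i) (MvPolynomial.psum s R m) = ∑ i ∈ s, a i ^ m := by
    simp only [MvPolynomial.psum, map_sum, map_pow, MvPolynomial.aeval_X,
      Finset.sum_coe_sort s fun i ↦ a i ^ m]
  have aeval_esymm (m : ℕ) :
      MvPolynomial.aeval (fun i : s ↦ a i) (MvPolynomial.esymm s R m) =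
        (s.val.map a).esymm m := by
    rw [MvPolynomial.aeval_esymm_eq_multiset_esymm]
    exact congrArg (Multiset.esymm · m) (Multiset.attach_map_val' s.val a)
  simpa only [map_add, map_mul, map_sum, map_pow, map_neg, map_one, map_natCast, aeval_psum,
    aeval_esymm] using congrArg (MvPolynomial.aeval fun i : s ↦ a i) (psum_succ_eq_esymm s R k)

theorem sum_pow_five_eq_esymm {ι R : Type*} [CommRing R] (s : Finset ι) (a : ι → R) :
    let e := (s.val.map a).esymm
    ∑ i ∈ s, a i ^ 5 =
      e 1 ^ 5 - 5 * e 1 ^ 3 * e 2 + 5 * e 1 * e 2 ^ 2 + 5 * e 1 ^ 2 * e 3 - 5 * e 2 * e 3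
        - 5 * e 1 * e 4 + 5 * e 5 := by
  simp only [sum_pow_succ_eq_esymm, Finset.sum_range_succ, Finset.sum_range_zero, Nat.reduceAdd,
    Nat.reduceSub]
  push_cast
  ring

theorem coeff_prod_one_add_C_mul_X {ι R : Type*} [CommSemiring R] (s : Finset ι) (a : ι → R)
    (k : ℕ) :
    (∏ i ∈ s, (1 + C (a i) * X)).coeff k = (s.val.map a).esymm k := by
  simp [Finset.prod_one_add, Finset.prod_mul_distrib, ← map_prod, coeff_C_mul, coeff_X_pow,
    Finset.esymm_map_val, Finset.powersetCard_eq_filter, Finset.sum_filter, eq_comm]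

end SymmetricFunctions

section SineProduct

open Polynomial
open Polynomial.Chebyshev hiding C C_mul

variable {n : ℕ}

theorem sin_pi_mul_div_ne_zero {k : ℕ} (hk : k ∈ Finset.Icc 1 (n - 1)) :
    sin (π * k / n) ≠ 0 := by
  obtain ⟨hk_pos, hk_lt⟩ : 0 < k ∧ k < n := by grind
  have hn_pos : (0 : ℝ) < n := mod_cast hk_pos.trans hk_lt
  refine (sin_pos_of_pos_of_lt_pi (by positivity) ?_).ne'
  rw [div_lt_iff₀ hn_pos]
  gcongr

theorem U_real_eq_prod (n : ℕ) :
    U ℝ n = C (2 ^ n) * ∏ k ∈ Finset.range n, (X - C (cos ((k + 1) * π / (n + 1)))) := by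
  have roots_eq : (U ℝ n).roots =
      (Multiset.range n).map fun k : ℕ ↦ cos ((k + 1) * π / (n + 1)) := by
    rw [roots_U_real, Finset.image_val, Finset.range_val, (roots_U_real_nodup n).dedup]
  have card_roots : (U ℝ n).roots.card = (U ℝ n).natDegree := by
    simp [roots_eq]
  rw [← C_leadingCoeff_mul_prod_multiset_X_sub_C card_roots, roots_eq, leadingCoeff_U_natCast,
    Multiset.map_map]
  rfl

theorem sin_nat_mul_eq_prod (hn : n ≠ 0) (x : ℝ) :
    sin (n * x) = sin x * ∏ k ∈ Finset.Icc 1 (n - 1), 2 * (cos x - cos (π * k / n)) := by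
  obtain ⟨m, rfl⟩ := Nat.exists_eq_succ_of_ne_zero hn
  calc sin ((m + 1 : ℕ) * x)
    _ = (U ℝ m).eval (cos x) * sin x := by
      rw [U_real_cos, Int.cast_natCast, Nat.cast_succ]
    _ = sin x * ∏ k ∈ Finset.range m, 2 * (cos x - cos (π * (k + 1 : ℕ) / (m + 1 : ℕ))) := by
      simp [U_real_eq_prod, eval_prod, Finset.prod_mul_distrib, mul_comm]
    _ = sin x * ∏ k ∈ Finset.Icc 1 m, 2 * (cos x - cos (π * k / (m + 1 : ℕ))) := by
      rw [Finset.range_eq_Ico,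
        Finset.prod_Ico_add' fun k : ℕ ↦ 2 * (cos x - cos (π * k / (m + 1 : ℕ)))]
      rfl

theorem prod_cos_sub_cos_eq_prod_cos_add_cos (n : ℕ) (x : ℝ) :
    ∏ k ∈ Finset.Icc 1 (n - 1), 2 * (cos x - cos (π * k / n)) =
      ∏ k ∈ Finset.Icc 1 (n - 1), 2 * (cos x + cos (π * k / n)) := by
  refine Finset.prod_nbij' (n - ·) (n - ·) (by grind) (by grind) (by grind) (by grind) fun k hk ↦ ?_
  obtain ⟨hk_pos, hk_lt⟩ : 0 < k ∧ k < n := by grind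
  have hn : (n : ℝ) ≠ 0 := mod_cast (hk_pos.trans hk_lt).ne'
  have reflect : π * (n - k : ℕ) / n = π - π * k / n := by
    rw [Nat.cast_sub hk_lt.le]
    field_simp
  rw [reflect, cos_pi_sub, ← sub_eq_add_neg]

theorem sin_nat_mul_sq_eq_prod (hn : n ≠ 0) (x : ℝ) :
    sin (n * x) ^ 2 =
      sin x ^ 2 * ∏ k ∈ Finset.Icc 1 (n - 1), 4 * (sin (π * k / n) ^ 2 - sin x ^ 2) := by
  rw [sin_nat_mul_eq_prod hn, mul_pow, sq (∏ k ∈ _, _)]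
  nth_rewrite 2 [prod_cos_sub_cos_eq_prod_cos_add_cos]
  rw [← Finset.prod_mul_distrib]
  congr! 2 with k
  rw [sin_sq, sin_sq]
  ring

theorem taylor_one_T_eq_prod (hn : n ≠ 0) :
    taylor 1 (T ℝ n) =
      1 + X * ∏ k ∈ Finset.Icc 1 (n - 1), (C (4 * sin (π * k / n) ^ 2) + 2 * X) := by
  have eval_eq (x : ℝ) : (taylor 1 (T ℝ n)).eval (-2 * sin x ^ 2) =
      (1 + X * ∏ k ∈ Finset.Icc 1 (n - 1), (C (4 * sin (π * k / n) ^ 2) + 2 * X)).eval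
        (-2 * sin x ^ 2) := by
    calc (taylor 1 (T ℝ n)).eval (-2 * sin x ^ 2)
      _ = (T ℝ n).eval (cos (2 * x)) := by
        rw [taylor_eval, cos_two_mul, cos_sq']
        ring_nf
      _ = 1 - 2 * sin (n * x) ^ 2 := by
        rw [T_real_cos, Int.cast_natCast, mul_left_comm, cos_two_mul, cos_sq']
        ring
      _ = _ := by
        have eval_factor (k : ℕ) : 4 * sin (π * k / n) ^ 2 + 2 * (-2 * sin x ^ 2) =
            4 * (sin (π * k / n) ^ 2 - sin x ^ 2) := by ring
        simp only [sin_nat_mul_sq_eq_prod hn, eval_add, eval_one, eval_mul, eval_X, eval_prod,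
          eval_C, eval_ofNat, eval_factor]
        ring
  refine eq_of_infinite_eval_eq _ _ ((Set.Icc_infinite (show (-2 : ℝ) < 0 by simp)).mono ?_)
  intro y hy
  have sin_arcsin_sqrt : sin (arcsin √(-y / 2)) = √(-y / 2) :=
    sin_arcsin (by linarith [sqrt_nonneg (-y / 2)]) (sqrt_le_one.mpr (by linarith [hy.1]))
  have hx : -2 * sin (arcsin √(-y / 2)) ^ 2 = y := by
    rw [sin_arcsin_sqrt, sq_sqrt (by linarith [hy.2])]
    ring
  exact hx ▸ eval_eq _

theorem prod_four_mul_sin_sq (hn : n ≠ 0) :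
    ∏ k ∈ Finset.Icc 1 (n - 1), 4 * sin (π * k / n) ^ 2 = (n : ℝ) ^ 2 := by
  have h := congrArg (coeff · 1) (taylor_one_T_eq_prod hn)
  simpa [taylor_coeff_one, derivative_T_eval_one, coeff_X_mul, coeff_zero_eq_eval_zero,
    eval_prod, coeff_one, eq_comm] using h

theorem taylor_one_T_eq_prod_one_add (hn : n ≠ 0) :
    taylor 1 (T ℝ n) = 1 + C ((n : ℝ) ^ 2) * X *
      ∏ k ∈ Finset.Icc 1 (n - 1), (1 + C ((2 * sin (π * k / n) ^ 2)⁻¹) * X) := by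
  rw [taylor_one_T_eq_prod hn, ← prod_four_mul_sin_sq hn, map_prod, mul_right_comm,
    ← Finset.prod_mul_distrib, mul_comm X]
  congr! 3 with k hk
  have hsin := sin_pi_mul_div_ne_zero hk
  have cancel : 4 * sin (π * k / n) ^ 2 * (2 * sin (π * k / n) ^ 2)⁻¹ = 2 := by
    field_simp
    norm_num
  rw [mul_add, mul_one, ← mul_assoc, ← C_mul, cancel, C_ofNat]

theorem coeff_taylor_one_T {𝔽 : Type*} [Field 𝔽] [CharZero 𝔽] (n : ℤ) (k : ℕ) :
    (taylor 1 (T 𝔽 n)).coeff k =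
      (∏ l ∈ Finset.range k, ((n : 𝔽) ^ 2 - l ^ 2) / (2 * l + 1)) / k.factorial := by
  rw [eq_div_iff (Nat.cast_ne_zero.mpr k.factorial_ne_zero), Finset.prod_div_distrib]
  have h := iterate_derivative_T_eval_one_eq_div (𝔽 := 𝔽) n k
  rw [← factorial_smul_hasseDeriv] at h
  simpa [taylor_coeff, mul_comm] using h

theorem esymm_inv_two_mul_sin_sq (hn : n ≠ 0) (k : ℕ) :
    ((Finset.Icc 1 (n - 1)).val.map fun j : ℕ ↦ ((2 * sin (π * j / n) ^ 2)⁻¹ : ℝ)).esymm k =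
      (∏ l ∈ Finset.range k, ((n : ℝ) ^ 2 - (l + 1) ^ 2) / (2 * l + 3)) / (k + 1).factorial := by
  have hn' : (n : ℝ) ^ 2 ≠ 0 := by positivity
  have h := congrArg (coeff · (k + 1)) (taylor_one_T_eq_prod_one_add hn)
  simp only [coeff_taylor_one_T, Finset.prod_range_succ', coeff_add, mul_assoc, coeff_C_mul,
    coeff_X_mul, coeff_prod_one_add_C_mul_X, coeff_one, k.succ_ne_zero, if_false, zero_add] at h
  refine mul_left_cancel₀ hn' (h.symm.trans ?_)
  have odd_factor (l : ℝ) : 2 * (l + 1) + 1 = 2 * l + 3 := by ring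
  push_cast
  simp only [odd_factor]
  ring

end SineProduct

theorem stmt_11_general (n : ℕ) (hn : n ≠ 0) :
    ∑ k ∈ Finset.Icc 1 (n - 1), 1 / sin (π * k / n) ^ 10 =
      (2 / 93555) * (n : ℝ) ^ 10 + (1 / 2835) * n ^ 8 + (26 / 8505) * n ^ 6 +
        (164 / 8505) * n ^ 4 + (128 / 945) * n ^ 2 - 14797 / 93555 := by
  have rescale : ∑ k ∈ Finset.Icc 1 (n - 1), 1 / sin (π * k / n) ^ 10 =
      2 ^ 5 * ∑ k ∈ Finset.Icc 1 (n - 1), (2 * sin (π * k / n) ^ 2)⁻¹ ^ 5 := by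
    rw [Finset.mul_sum]
    congr! 1 with k
    rw [inv_pow, mul_pow, ← pow_mul, mul_inv, mul_inv_cancel_left₀ (by norm_num), one_div]
  rw [rescale, sum_pow_five_eq_esymm]
  simp only [esymm_inv_two_mul_sin_sq hn, Finset.prod_range_succ, Finset.prod_range_zero,
    Nat.factorial]
  push_cast
  ring

theorem stmt_11 (p : ℕ) (hp : p.Prime) (hodd : Odd p) (hp10 : 10 < p) :
    ((p : ℝ) ^ 5 / 2 ^ 11) * ∑ θ ∈ Finset.Icc 1 (p - 1), 1 / Real.sin (π * θ / p) ^ 10 =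
      (1 / 2048) * ((2 / 93555) * (p : ℝ) ^ 15 + (1 / 2835) * p ^ 13 +
        (26 / 8505) * p ^ 11 + (164 / 8505) * p ^ 9 + (128 / 945) * p ^ 7 -
        (14797 / 93555) * p ^ 5) := by
  rw [stmt_11_general p hp.ne_zero]
  ring
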